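/- Let M be a Hausdorff topological space, I an index type, Ω : I → Set M a family of open subsets, and r a reflexive and symmetric relation on I satisfying: (1) for all i, j, Ω i ∩ Ω j is preconnected; (2) r i j implies Ω i ∩ Ω j nonempty; (3) r i j, r j k and Ω i ∩ Ω j ∩ Ω k nonempty imply r i k. Suppose (N, φ, α) and (N', φ', α') are two triples where N, N' are Hausdorff topological spaces, φ : N → M and φ' : N' → M are local homeomorphisms, α i : Ω i → N and α' i : Ω i → N' are continuous, and each triple satisfies: (A) the images of the α i (resp. α' i) cover N (resp. N'); (B) r i j holds iff the images of α i and α j (resp. α' i and α' j) intersect; (C) φ (α i x) = x and φ' (α' i x) = x for all i and x ∈ Ω i. Then there exists a unique homeomorphism ψ : N → N' such that φ' ∘ ψ = φ and ψ ∘ α i = α' i for all i. -/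

import Mathlib

/-!
By unique lifting over the preconnected set `Ω i ∩ Ω j`, two local sections `α i`, `α j` of a
separated local homeomorphism agree on all of `Ω i ∩ Ω j` as soon as their images meet. As the
sections are open embeddings covering `N`, this exhibits `N` as the quotient of the disjoint union
`Σ i, Ω i` by the relation identifying `(i, x)` with `(j, y)` when `x = y` and the images of `α i`
and `α j` meet. The images of `α' i` and `α' j` meet for the same pairs `i, j`, so `N'` is the
quotient by the same relation.
-/

open Set Topology

section Quotient

variable {X Y Z : Type*} [TopologicalSpace X] [TopologicalSpace Y] [TopologicalSpace Z]

theorem exists_continuousMap_of_factorsThrough {q : Z → X} {g : Z → Y} (hq : IsQuotientMap q)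
    (hg : Continuous g) (hfactors : g.FactorsThrough q) : ∃ f : C(X, Y), ∀ a, f (q a) = g a := by
  let qc : C(Z, X) := ⟨q, hq.continuous⟩
  let gc : C(Z, Y) := ⟨g, hg⟩
  have hlift := IsQuotientMap.lift_comp (f := qc) hq gc hfactors
  exact ⟨IsQuotientMap.lift (f := qc) hq gc hfactors, DFunLike.congr_fun hlift⟩

theorem existsUnique_homeomorph_of_isQuotientMap {q : Z → X} {q' : Z → Y}
    (hq : IsQuotientMap q) (hq' : IsQuotientMap q') (hker : ∀ a b, q a = q b ↔ q' a = q' b) :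
    ∃! ψ : X ≃ₜ Y, ∀ a, ψ (q a) = q' a := by
  obtain ⟨toY, toY_apply⟩ :=
    exists_continuousMap_of_factorsThrough hq hq'.continuous fun a b ↦ (hker a b).1
  obtain ⟨toX, toX_apply⟩ :=
    exists_continuousMap_of_factorsThrough hq' hq.continuous fun a b ↦ (hker a b).2
  refine ⟨⟨⟨toY, toX, ?_, ?_⟩, toY.continuous, toX.continuous⟩, toY_apply, fun ψ hψ ↦ ?_⟩
  · exact hq.surjective.forall.2 fun a ↦ by rw [toY_apply, toX_apply]
  · exact hq'.surjective.forall.2 fun a ↦ by rw [toX_apply, toY_apply]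
  · exact Homeomorph.ext <| hq.surjective.forall.2 fun a ↦ (hψ a).trans (toY_apply a).symm

theorem isOpenQuotientMap_sigma {ι : Type*} {W : ι → Type*} [∀ i, TopologicalSpace (W i)]
    {f : ∀ i, W i → X} (hcont : ∀ i, Continuous (f i)) (hopen : ∀ i, IsOpenMap (f i))
    (hcover : ⋃ i, range (f i) = univ) :
    IsOpenQuotientMap fun p : Σ i, W i ↦ f p.1 p.2 where
  surjective x := by
    obtain ⟨i, w, hw⟩ := mem_iUnion.1 (hcover ▸ mem_univ x)
    exact ⟨⟨i, w⟩, hw⟩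
  continuous := continuous_sigma hcont
  isOpenMap := isOpenMap_sigma.2 hopen

end Quotient

section LocalSections

variable {M N : Type*} [TopologicalSpace M] [TopologicalSpace N] {φ : N → M}

theorem isOpenEmbedding_of_section (hφ : IsLocalHomeomorph φ) {U : Set M} (hU : IsOpen U)
    {s : U → N} (hs : Continuous s) (hφs : ∀ x, φ (s x) = x) : IsOpenEmbedding s := by
  have hcomp : φ ∘ s = Subtype.val := funext hφs
  exact hφ.isOpenEmbedding_of_comp (hcomp ▸ hU.isOpenEmbedding_subtypeVal) hs

theorem section_eq_section_iff (hsep : IsSeparatedMap φ) (hinj : IsLocallyInjective φ)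
    {U V : Set M} (hUV : IsPreconnected (U ∩ V)) {s : U → N} {t : V → N}
    (hs : Continuous s) (ht : Continuous t) (hφs : ∀ x, φ (s x) = x) (hφt : ∀ x, φ (t x) = x)
    {x : U} {y : V} : s x = t y ↔ (x : M) = y ∧ (range s ∩ range t).Nonempty := by
  have base_eq {x : U} {y : V} (h : s x = t y) : (x : M) = y := by rw [← hφs, h, hφt]
  refine ⟨fun h ↦ ⟨base_eq h, s x, mem_range_self x, y, h.symm⟩, ?_⟩
  rintro ⟨hxy, _, ⟨a, rfl⟩, b, hba⟩
  have hab : (a : M) = b := base_eq hba.symm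
  have : PreconnectedSpace ↥(U ∩ V) := isPreconnected_iff_preconnectedSpace.1 hUV
  have hagree : s ∘ inclusion inter_subset_left = t ∘ inclusion inter_subset_right :=
    hsep.eq_of_comp_eq hinj (hs.comp (continuous_inclusion _)) (ht.comp (continuous_inclusion _))
      (by funext z; simp only [Function.comp_apply, hφs, hφt]) ⟨a, a.2, hab ▸ b.2⟩
      (hba.symm.trans (congrArg t (Subtype.ext hab.symm)))
  exact (congrFun hagree ⟨x, x.2, hxy ▸ y.2⟩).trans (congrArg t (Subtype.ext hxy))

end LocalSections

theorem join_uniqueness_general {M N N' I : Type*}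
    [TopologicalSpace M] [TopologicalSpace N] [TopologicalSpace N']
    {Ω : I → Set M} (hΩ : ∀ i, IsOpen (Ω i)) (hconn : ∀ i j, IsPreconnected (Ω i ∩ Ω j))
    {φ : N → M} {φ' : N' → M} {α : ∀ i, Ω i → N} {α' : ∀ i, Ω i → N'}
    (hφ : IsLocalHomeomorph φ) (hφ' : IsLocalHomeomorph φ')
    (hsep : IsSeparatedMap φ) (hsep' : IsSeparatedMap φ')
    (hα : ∀ i, Continuous (α i)) (hα' : ∀ i, Continuous (α' i))
    (hcover : ⋃ i, range (α i) = univ) (hcover' : ⋃ i, range (α' i) = univ)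
    (hmeet : ∀ i j, (range (α i) ∩ range (α j)).Nonempty ↔ (range (α' i) ∩ range (α' j)).Nonempty)
    (hsec : ∀ i (x : Ω i), φ (α i x) = x) (hsec' : ∀ i (x : Ω i), φ' (α' i x) = x) :
    ∃! ψ : N ≃ₜ N', (∀ x, φ' (ψ x) = φ x) ∧ ∀ i (x : Ω i), ψ (α i x) = α' i x := by
  have hq : IsOpenQuotientMap fun p : Σ i, Ω i ↦ α p.1 p.2 := isOpenQuotientMap_sigma hα
    (fun i ↦ (isOpenEmbedding_of_section hφ (hΩ i) (hα i) (hsec i)).isOpenMap) hcover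
  have hq' : IsOpenQuotientMap fun p : Σ i, Ω i ↦ α' p.1 p.2 := isOpenQuotientMap_sigma hα'
    (fun i ↦ (isOpenEmbedding_of_section hφ' (hΩ i) (hα' i) (hsec' i)).isOpenMap) hcover'
  have hker (p p' : Σ i, Ω i) : α p.1 p.2 = α p'.1 p'.2 ↔ α' p.1 p.2 = α' p'.1 p'.2 := by
    rw [section_eq_section_iff hsep hφ.isLocallyInjective (hconn _ _) (hα _) (hα _)
        (hsec _) (hsec _), hmeet,
      section_eq_section_iff hsep' hφ'.isLocallyInjective (hconn _ _) (hα' _) (hα' _)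
        (hsec' _) (hsec' _)]
  obtain ⟨ψ, hψ, huniq⟩ :=
    existsUnique_homeomorph_of_isQuotientMap hq.isQuotientMap hq'.isQuotientMap hker
  refine ⟨ψ, ⟨hq.surjective.forall.2 fun p ↦ ?_, fun i x ↦ hψ ⟨i, x⟩⟩,
    fun χ hχ ↦ huniq χ fun p ↦ hχ.2 p.1 p.2⟩
  rw [hψ, hsec, hsec']

/-- Uniqueness part of the join construction (Theorem 2.2.1), stated topologically. -/
theorem join_uniqueness.{u, v, w, x}
    (M : Type u) [TopologicalSpace M] [T2Space M]
    (I : Type v) (Ω : I → Set M) (hΩ : ∀ i, IsOpen (Ω i))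
    (r : I → I → Prop) (hrefl : ∀ i, r i i) (hsymm : ∀ i j, r i j → r j i)
    (h1 : ∀ i j, IsPreconnected (Ω i ∩ Ω j))
    (h2 : ∀ i j, r i j → (Ω i ∩ Ω j).Nonempty)
    (h3 : ∀ i j k, r i j → r j k → (Ω i ∩ Ω j ∩ Ω k).Nonempty → r i k)
    (N : Type w) [TopologicalSpace N] [T2Space N]
    (N' : Type x) [TopologicalSpace N'] [T2Space N']
    (φ : N → M) (φ' : N' → M) (α : ∀ i, Ω i → N) (α' : ∀ i, Ω i → N')
    (hφ : IsLocalHomeomorph φ) (hφ' : IsLocalHomeomorph φ')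
    (hα : ∀ i, Continuous (α i)) (hα' : ∀ i, Continuous (α' i))
    (hA : (⋃ i, Set.range (α i)) = Set.univ)
    (hA' : (⋃ i, Set.range (α' i)) = Set.univ)
    (hB : ∀ i j, r i j ↔ (Set.range (α i) ∩ Set.range (α j)).Nonempty)
    (hB' : ∀ i j, r i j ↔ (Set.range (α' i) ∩ Set.range (α' j)).Nonempty)
    (hC : ∀ i (x : Ω i), φ (α i x) = (x : M))
    (hC' : ∀ i (x : Ω i), φ' (α' i x) = (x : M)) :
    ∃! ψ : N ≃ₜ N', (∀ x, φ' (ψ x) = φ x) ∧ ∀ i (x : Ω i), ψ (α i x) = α' i x :=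
  join_uniqueness_general hΩ h1 hφ hφ' (T2Space.isSeparatedMap φ) (T2Space.isSeparatedMap φ')
    hα hα' hA hA' (fun i j ↦ (hB i j).symm.trans (hB' i j)) hC hC'
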